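/- Let F be a finite digraph and let t ≥ 1 be an integer. Let K_{1,t} denote the star digraph with a central vertex c and leaves u₁, …, u_t, whose arcs are exactly (c, u_i) for each i (so c is a source). Then the Cartesian product F □ K_{1,t} is an ECD digraph if and only if there exist sets Z ⊆ V(F) and W ⊆ V(F) ∖ Z such that Z is an ECD set of F, W is an ECD set of the subdigraph of F induced by V(F) ∖ Z, and no arc of F starts at a vertex of W and ends at a vertex of Z. -/

import Mathlib

/-- The closed out-neighborhood of `v` in the digraph with arc relation `A`. -/
def closedOut {V : Type*} (A : V → V → Prop) (v : V) : Set V := {v} ∪ {u | A v u}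

/-- `S` is an efficient closed dominating (ECD) set: the closed out-neighborhoods
centered in vertices of `S` are pairwise disjoint and cover the whole vertex set. -/
def IsECD {V : Type*} (A : V → V → Prop) (S : Set V) : Prop :=
  (∀ v ∈ S, ∀ w ∈ S, v ≠ w → closedOut A v ∩ closedOut A w = ∅) ∧
  (⋃ v ∈ S, closedOut A v) = Set.univ

/-- A digraph is an ECD digraph if it admits an ECD set. -/
def IsECDDigraph {V : Type*} (A : V → V → Prop) : Prop := ∃ S, IsECD A S

/-- `S` is an ECD set of the subdigraph induced by `T` (neighborhoods restricted to `T`). -/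
def IsECDWithin {V : Type*} (A : V → V → Prop) (T S : Set V) : Prop :=
  S ⊆ T ∧
  (∀ v ∈ S, ∀ w ∈ S, v ≠ w → (closedOut A v ∩ T) ∩ (closedOut A w ∩ T) = ∅) ∧
  (⋃ v ∈ S, closedOut A v ∩ T) = T

/-- Arc relation of the Cartesian product of two digraphs. -/
def cartArc {V W : Type*} (A : V → V → Prop) (B : W → W → Prop) :
    V × W → V × W → Prop :=
  fun p q => (A p.1 q.1 ∧ p.2 = q.2) ∨ (p.1 = q.1 ∧ B p.2 q.2)

/-- Arc relation of the directed cycle `C_k^0` on `ZMod k`: arcs `(i, i+1)`. -/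
def cycArc (k : ℕ) : ZMod k → ZMod k → Prop := fun i j => j = i + 1

/-- Arc relation of the star `K_{1,t}` on `Option (Fin t)`: the center `none` is a source
and the arcs are exactly `(none, some i)` for each leaf `i`. -/
def starArc (t : ℕ) : Option (Fin t) → Option (Fin t) → Prop :=
  fun p q => p = none ∧ q ≠ none

/-!
A set is an ECD set exactly when every vertex has a unique dominator in it. In `F □ K_{1,t}`, with
`c` the center of the star, a vertex `(x, c)` is dominated only from within the central copy of `F`,
so the trace `Z` of an ECD set there is an ECD set of `F`. A vertex `(x, l)` over a leaf `l` is
dominated only from within its own copy of `F` and by `(x, c)`: if `x ∈ Z`, then `(x, c)` is already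
the dominator and the trace `W` at `l` must not dominate `x`; otherwise `x` needs a unique dominator
in `W`. Conversely, placing `Z` at the center and the same `W` at every leaf gives an ECD set.
-/

section Dominators

variable {V : Type*} {A : V → V → Prop} {S T : Set V}

theorem mem_closedOut_iff {u v : V} : u ∈ closedOut A v ↔ u = v ∨ A v u := Iff.rfl

theorem isECDWithin_iff_existsUnique :
    IsECDWithin A T S ↔ S ⊆ T ∧ ∀ x ∈ T, ∃! v, v ∈ S ∧ x ∈ closedOut A v := by
  have disjoint_iff : (∀ v ∈ S, ∀ w ∈ S, v ≠ w → (closedOut A v ∩ T) ∩ (closedOut A w ∩ T) = ∅) ↔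
      ∀ x ∈ T, ∀ v ∈ S, x ∈ closedOut A v → ∀ w ∈ S, x ∈ closedOut A w → v = w := by
    simp only [Set.eq_empty_iff_forall_notMem, Set.mem_inter_iff]
    grind
  have cover_iff : (⋃ v ∈ S, closedOut A v ∩ T) = T ↔ ∀ x ∈ T, ∃ v ∈ S, x ∈ closedOut A v := by
    simp only [← Set.iUnion₂_inter, Set.inter_eq_right, Set.subset_def, Set.mem_iUnion₂,
      exists_prop]
  rw [IsECDWithin, disjoint_iff, cover_iff]
  simp only [ExistsUnique]
  grind

theorem isECDWithin_univ_iff : IsECDWithin A Set.univ S ↔ IsECD A S := by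
  simp only [IsECDWithin, IsECD, Set.subset_univ, Set.inter_univ, true_and]

theorem isECD_iff_existsUnique :
    IsECD A S ↔ ∀ x, ∃! v, v ∈ S ∧ x ∈ closedOut A v := by
  simp only [← isECDWithin_univ_iff, isECDWithin_iff_existsUnique, Set.subset_univ,
    Set.mem_univ, true_and, true_imp_iff]

theorem forall_notMem_closedOut_iff {Z W : Set V} :
    (∀ z ∈ Z, ∀ w ∈ W, z ∉ closedOut A w) ↔ W ⊆ Zᶜ ∧ ∀ w ∈ W, ∀ z ∈ Z, ¬ A w z := by
  simp only [mem_closedOut_iff, Set.subset_def, Set.mem_compl_iff]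
  grind

end Dominators

section Layers

variable {V U : Type*} {A : V → V → Prop} {K : U → U → Prop} {S : Set (V × U)} {c l : U}

theorem mem_closedOut_cartArc_iff {x v : V} {j i : U} :
    (x, j) ∈ closedOut (cartArc A K) (v, i) ↔
      (x ∈ closedOut A v ∧ i = j) ∨ (v = x ∧ j ∈ closedOut K i) := by
  simp only [mem_closedOut_iff, cartArc, Prod.mk.injEq]
  grind

theorem mem_closedOut_cartArc_source_iff (hc : ∀ i, c ∈ closedOut K i ↔ i = c)
    {x v : V} {i : U} :
    (x, c) ∈ closedOut (cartArc A K) (v, i) ↔ x ∈ closedOut A v ∧ i = c := by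
  rw [mem_closedOut_cartArc_iff, hc]
  grind [mem_closedOut_iff]

/-- The trace on `V` of a set of vertices of a product in the copy of the first factor
indexed by `i`. -/
def layer (S : Set (V × U)) (i : U) : Set V := {v | (v, i) ∈ S}

theorem mem_layer_iff {v : V} {i : U} : v ∈ layer S i ↔ (v, i) ∈ S := Iff.rfl

theorem existsUnique_mem_and_snd_eq_iff (P : V → Prop) {i : U} :
    (∃! p : V × U, p ∈ S ∧ P p.1 ∧ p.2 = i) ↔ ∃! v, v ∈ layer S i ∧ P v := by
  simp only [ExistsUnique, Prod.exists, Prod.forall, mem_layer_iff, Prod.mk.injEq]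
  grind

theorem existsUnique_dominator_source_iff (hc : ∀ i, c ∈ closedOut K i ↔ i = c) (x : V) :
    (∃! p, p ∈ S ∧ (x, c) ∈ closedOut (cartArc A K) p) ↔
      ∃! v, v ∈ layer S c ∧ x ∈ closedOut A v :=
  (existsUnique_congr fun _ ↦ and_congr_right' (mem_closedOut_cartArc_source_iff hc)).trans
    (existsUnique_mem_and_snd_eq_iff (x ∈ closedOut A ·))

theorem mem_closedOut_cartArc_leaf_iff (hl : ∀ i, l ∈ closedOut K i ↔ i = l ∨ i = c)
    {x v : V} {i : U} :
    (x, l) ∈ closedOut (cartArc A K) (v, i) ↔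
      (x ∈ closedOut A v ∧ i = l) ∨ (v = x ∧ i = c) := by
  rw [mem_closedOut_cartArc_iff, hl]
  grind [mem_closedOut_iff]

theorem existsUnique_dominator_leaf_iff_of_mem (hlc : l ≠ c)
    (hl : ∀ i, l ∈ closedOut K i ↔ i = l ∨ i = c) {x : V} (hx : x ∈ layer S c) :
    (∃! p, p ∈ S ∧ (x, l) ∈ closedOut (cartArc A K) p) ↔
      ∀ w ∈ layer S l, x ∉ closedOut A w := by
  have hxS : (x, c) ∈ S ∧ (x, l) ∈ closedOut (cartArc A K) (x, c) :=
    ⟨hx, (mem_closedOut_cartArc_leaf_iff hl).2 (Or.inr ⟨rfl, rfl⟩)⟩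
  constructor
  · intro hunique w hw hxw
    have : (w, l) = (x, c) :=
      hunique.unique ⟨hw, (mem_closedOut_cartArc_leaf_iff hl).2 (Or.inl ⟨hxw, rfl⟩)⟩ hxS
    exact hlc (congrArg Prod.snd this)
  · refine fun hW ↦ ⟨(x, c), hxS, ?_⟩
    rintro ⟨v, i⟩ ⟨hv, hvx⟩
    obtain ⟨hxv, rfl⟩ | ⟨rfl, rfl⟩ := (mem_closedOut_cartArc_leaf_iff hl).1 hvx
    · exact absurd hxv (hW v hv)
    · rfl

theorem existsUnique_dominator_leaf_iff_of_notMem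
    (hl : ∀ i, l ∈ closedOut K i ↔ i = l ∨ i = c) {x : V} (hx : x ∉ layer S c) :
    (∃! p, p ∈ S ∧ (x, l) ∈ closedOut (cartArc A K) p) ↔
      ∃! w, w ∈ layer S l ∧ x ∈ closedOut A w := by
  have dominator_iff (p : V × U) (hp : p ∈ S) :
      (x, l) ∈ closedOut (cartArc A K) p ↔ x ∈ closedOut A p.1 ∧ p.2 = l := by
    rw [mem_closedOut_cartArc_leaf_iff hl, or_iff_left]
    rintro ⟨rfl, rfl⟩
    exact hx hp
  exact (existsUnique_congr fun p ↦ and_congr_right (dominator_iff p)).trans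
    (existsUnique_mem_and_snd_eq_iff (x ∈ closedOut A ·))

theorem forall_existsUnique_dominator_leaf_iff (hlc : l ≠ c)
    (hl : ∀ i, l ∈ closedOut K i ↔ i = l ∨ i = c) :
    (∀ x, ∃! p, p ∈ S ∧ (x, l) ∈ closedOut (cartArc A K) p) ↔
      IsECDWithin A (layer S c)ᶜ (layer S l) ∧
        ∀ w ∈ layer S l, ∀ z ∈ layer S c, ¬ A w z := by
  calc
    _ ↔ (∀ x ∈ layer S c, ∃! p, p ∈ S ∧ (x, l) ∈ closedOut (cartArc A K) p) ∧
          ∀ x ∈ (layer S c)ᶜ, ∃! p, p ∈ S ∧ (x, l) ∈ closedOut (cartArc A K) p :=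
      ⟨fun h ↦ ⟨fun x _ ↦ h x, fun x _ ↦ h x⟩, fun h x ↦ (em (x ∈ layer S c)).elim (h.1 x) (h.2 x)⟩
    _ ↔ (∀ x ∈ layer S c, ∀ w ∈ layer S l, x ∉ closedOut A w) ∧
          ∀ x ∈ (layer S c)ᶜ, ∃! w, w ∈ layer S l ∧ x ∈ closedOut A w :=
      and_congr
        (forall₂_congr fun _ hx ↦ existsUnique_dominator_leaf_iff_of_mem hlc hl hx)
        (forall₂_congr fun _ hx ↦ existsUnique_dominator_leaf_iff_of_notMem hl hx)
    _ ↔ _ := by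
      rw [forall_notMem_closedOut_iff, isECDWithin_iff_existsUnique, and_right_comm]

end Layers

section OutStar

variable {V U : Type*} {B : V → V → Prop} {S : Set (V × U)} {c : U}

/-- Arc relation of the star on an arbitrary vertex type `U` whose center `c` is a source:
every other vertex is a leaf, so there may be infinitely many of them. -/
def outStarArc (c : U) : U → U → Prop := fun i j ↦ i = c ∧ j ≠ c

theorem center_mem_closedOut_outStarArc_iff {i : U} : c ∈ closedOut (outStarArc c) i ↔ i = c := by
  simp only [mem_closedOut_iff, outStarArc, ne_eq, not_true_eq_false, and_false, or_false, eq_comm]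

theorem leaf_mem_closedOut_outStarArc_iff {l i : U} (hl : l ≠ c) :
    l ∈ closedOut (outStarArc c) i ↔ i = l ∨ i = c := by
  simp only [mem_closedOut_iff, outStarArc, ne_eq, hl, not_false_eq_true, and_true,
    eq_comm (a := l)]

theorem isECD_cartArc_outStarArc_iff :
    IsECD (cartArc B (outStarArc c)) S ↔
      IsECD B (layer S c) ∧ ∀ l ≠ c, IsECDWithin B (layer S c)ᶜ (layer S l) ∧
        ∀ w ∈ layer S l, ∀ z ∈ layer S c, ¬ B w z := by
  calc
    _ ↔ ∀ i x, ∃! p, p ∈ S ∧ (x, i) ∈ closedOut (cartArc B (outStarArc c)) p := by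
      rw [isECD_iff_existsUnique, Prod.forall, forall_comm]
    _ ↔ (∀ x, ∃! p, p ∈ S ∧ (x, c) ∈ closedOut (cartArc B (outStarArc c)) p) ∧
          ∀ l ≠ c, ∀ x, ∃! p, p ∈ S ∧ (x, l) ∈ closedOut (cartArc B (outStarArc c)) p :=
      ⟨fun h ↦ ⟨h c, fun l _ ↦ h l⟩, fun h i ↦ (eq_or_ne i c).elim (fun hi ↦ hi ▸ h.1) (h.2 i)⟩
    _ ↔ _ := by
      rw [isECD_iff_existsUnique]
      exact and_congr
        (forall_congr' (existsUnique_dominator_source_iff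
          fun _ ↦ center_mem_closedOut_outStarArc_iff))
        (forall₂_congr fun _ hl ↦ forall_existsUnique_dominator_leaf_iff hl
          fun _ ↦ leaf_mem_closedOut_outStarArc_iff hl)

theorem cart_star_ecd_iff_general [Nontrivial U] (B : V → V → Prop) (c : U) :
    IsECDDigraph (cartArc B (outStarArc c)) ↔
      ∃ Z W : Set V, W ⊆ Zᶜ ∧ IsECD B Z ∧ IsECDWithin B Zᶜ W ∧
        ∀ w ∈ W, ∀ z ∈ Z, ¬ B w z := by
  simp only [IsECDDigraph, isECD_cartArc_outStarArc_iff]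
  constructor
  · rintro ⟨S, hcenter, hleaf⟩
    obtain ⟨l, hl⟩ := exists_ne c
    obtain ⟨hwithin, hno_arc⟩ := hleaf l hl
    exact ⟨layer S c, layer S l, hwithin.1, hcenter, hwithin, hno_arc⟩
  · rintro ⟨Z, W, -, hZ, hW, hno_arc⟩
    let S : Set (V × U) := {p | (p.2 = c ∧ p.1 ∈ Z) ∨ (p.2 ≠ c ∧ p.1 ∈ W)}
    have layer_center : layer S c = Z := by simp [S, layer]
    have layer_leaf {l : U} (hl : l ≠ c) : layer S l = W := by simp [S, layer, hl]
    refine ⟨S, by rwa [layer_center], fun l hl ↦ ?_⟩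
    rw [layer_center, layer_leaf hl]
    exact ⟨hW, hno_arc⟩

end OutStar

/-- `F □ K_{1,t}` (central vertex a source) is an ECD digraph iff there are sets
`Z` and `W ⊆ V(F) ∖ Z` such that `Z` is an ECD set of `F`, `W` is an ECD set of the
subdigraph induced by `V(F) ∖ Z`, and no arc of `F` starts in `W` and ends in `Z`. -/
theorem cart_star_ecd_iff {V : Type*} [Fintype V] (B : V → V → Prop)
    (t : ℕ) (ht : 1 ≤ t) :
    IsECDDigraph (cartArc B (starArc t)) ↔
      ∃ Z W : Set V, W ⊆ Zᶜ ∧ IsECD B Z ∧ IsECDWithin B Zᶜ W ∧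
        ∀ w ∈ W, ∀ z ∈ Z, ¬ B w z := by
  have : Nonempty (Fin t) := Fin.pos_iff_nonempty.1 ht
  exact cart_star_ecd_iff_general B none
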